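/- (One-step second-moment recursion for LMC) Let f : ℝ^d → ℝ be twice continuously differentiable with m·I ≼ ∇²f(x) ≼ L·I for all x (0 < m ≤ L), κ = L/m, and ∇f(0) = 0. Let (x̄_k) be the LMC iterates with step size h started from a square-integrable initial value. Then for every h with 0 ≤ h ≤ 1/(4κL) and every k ≥ 0: E‖x̄_{k+1}‖² ≤ (1 − (7/4)mh) E‖x̄_k‖² + 2hd. -/

import Mathlib

open MeasureTheory ProbabilityTheory Real
open scoped ENNReal NNReal

noncomputable section

/-- `ℝ^d` with the Euclidean structure. -/
abbrev Euc (d : ℕ) := EuclideanSpace ℝ (Fin d)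

/-- The standard Gaussian measure `N(0, I_d)` on `ℝ^d`. -/
noncomputable def stdGaussian (d : ℕ) : Measure (Euc d) :=
  (Measure.pi fun _ : Fin d => gaussianReal 0 1).map (EuclideanSpace.equiv (Fin d) ℝ).symm

/-- The centered Gaussian measure on `ℝ^d` with covariance `σ2 • I_d`. -/
noncomputable def isoGaussian (d : ℕ) (σ2 : ℝ) : Measure (Euc d) :=
  (stdGaussian d).map fun x => Real.sqrt σ2 • x

/-- `B` is a standard `d`-dimensional Brownian motion with respect to the filtration `ℱ`
under the probability measure `P`. -/
structure IsStdBrownian {d : ℕ} {Ω : Type*} {mΩ : MeasurableSpace Ω} (P : Measure Ω)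
    (ℱ : Filtration ℝ mΩ) (B : ℝ → Ω → Euc d) : Prop where
  init : ∀ ω, B 0 ω = 0
  cont : ∀ ω, Continuous fun t => B t ω
  adapted : StronglyAdapted ℱ B
  incr_law : ∀ s t : ℝ, 0 ≤ s → s ≤ t →
    P.map (fun ω => B t ω - B s ω) = isoGaussian d (t - s)
  incr_indep : ∀ s t : ℝ, 0 ≤ s → s ≤ t →
    Indep (MeasurableSpace.comap (fun ω => B t ω - B s ω) inferInstance) (ℱ s) P

/-- `X` is a (pathwise) solution of the overdamped Langevin dynamics
`dX_t = -∇f(X_t) dt + √2 dB_t`: a continuous adapted process satisfying the integral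
equation `X_t = X_0 - ∫₀ᵗ ∇f(X_s) ds + √2 B_t` for all `t ≥ 0`. -/
structure IsLangevinSolution {d : ℕ} {Ω : Type*} {mΩ : MeasurableSpace Ω}
    (ℱ : Filtration ℝ mΩ) (f : Euc d → ℝ) (B : ℝ → Ω → Euc d) (X : ℝ → Ω → Euc d) : Prop where
  cont : ∀ ω, Continuous fun t => X t ω
  adapted : StronglyAdapted ℱ X
  eqn : ∀ ω, ∀ t : ℝ, 0 ≤ t →
    X t ω = X 0 ω - (∫ s in (0:ℝ)..t, gradient f (X s ω)) + Real.sqrt 2 • B t ω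

/-- The Hessian bounds `m • I ≼ ∇²f(x) ≼ L • I` for all `x`, expressed through the second
iterated Fréchet derivative: `m ‖v‖² ≤ ⟨v, ∇²f(x) v⟩ ≤ L ‖v‖²`. -/
def HessianBounds {d : ℕ} (m L : ℝ) (f : Euc d → ℝ) : Prop :=
  ∀ x v : Euc d, m * ‖v‖ ^ 2 ≤ iteratedFDeriv ℝ 2 f x ![v, v] ∧
    iteratedFDeriv ℝ 2 f x ![v, v] ≤ L * ‖v‖ ^ 2

end

/-!
The gradient step `x ↦ x - h∇f(x)` has derivative `I - h∇²f(x)`, a symmetric operator whose spectrum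
lies in `[1 - Lh, 1 - mh]`; it is therefore Lipschitz with constant `q = max |1 - mh| |1 - Lh|`, and
since it fixes the critical point `0`, it satisfies `‖x - h∇f(x)‖ ≤ q‖x‖`. The iterate `x̄_k` is a
function of `x̄₀, ξ₁, …, ξ_k`, hence independent of the centered noise `ξ_{k+1}`, so the cross term
in `E‖x̄_{k+1}‖²` vanishes and only `q² E‖x̄_k‖² + 2h E‖ξ_{k+1}‖²` remains. For
`h ≤ 1/(4κL)` one has `0 ≤ mh ≤ Lh ≤ 1/4`, so `q² = (1 - mh)² ≤ 1 - (7/4)mh`.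
-/

section GradientStep

variable {E : Type*} [NormedAddCommGroup E] [InnerProductSpace ℝ E]

lemma opNorm_le_of_symm_of_abs_apply_self_le {B : E →L[ℝ] E →L[ℝ] ℝ} {C : ℝ} (hC : 0 ≤ C)
    (hsymm : ∀ u v, B u v = B v u) (hB : ∀ v, |B v v| ≤ C * ‖v‖ ^ 2) : ‖B‖ ≤ C := by
  refine B.opNorm_le_of_unit_norm hC fun u hu ↦ (B u).opNorm_le_of_unit_norm hC fun v hv ↦ ?_
  have polarization : 4 * B u v = B (u + v) (u + v) - B (u - v) (u - v) := by
    simp only [map_add, map_sub, add_apply, sub_apply, hsymm v u]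
    ring
  have parallelogram : ‖u + v‖ ^ 2 + ‖u - v‖ ^ 2 = 4 := by
    have := parallelogram_law_with_norm ℝ u v
    rw [hu, hv] at this
    linarith
  calc |B u v| = |B (u + v) (u + v) - B (u - v) (u - v)| / 4 := by
        rw [← polarization, abs_mul]; norm_num
    _ ≤ (C * ‖u + v‖ ^ 2 + C * ‖u - v‖ ^ 2) / 4 := by
        gcongr
        exact (abs_sub _ _).trans (add_le_add (hB _) (hB _))
    _ = C := by rw [← mul_add, parallelogram]; ring

/-- The gradient descent step `x ↦ x - h∇f(x)`, i.e. the drift part of one LMC step. -/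
noncomputable def gradientStep [CompleteSpace E] (f : E → ℝ) (h : ℝ) (x : E) : E :=
  x - h • gradient f x

/-- The Lipschitz constant of the gradient step of size `h` for a function whose Hessian has
spectrum in `[m, L]`. -/
noncomputable def gradientStepRate (m L h : ℝ) : ℝ≥0 := max ‖1 - m * h‖₊ ‖1 - L * h‖₊

lemma abs_sub_mul_le_gradientStepRate_mul {m L h n q : ℝ} (hh : 0 ≤ h) (hn : 0 ≤ n)
    (hm : m * n ≤ q) (hL : q ≤ L * n) : |n - h * q| ≤ gradientStepRate m L h * n := by
  have hlower : (1 - L * h) * n ≤ n - h * q := by nlinarith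
  have hupper : n - h * q ≤ (1 - m * h) * n := by nlinarith
  calc |n - h * q| ≤ max |(1 - L * h) * n| |(1 - m * h) * n| := abs_le_max_abs_abs hlower hupper
    _ = gradientStepRate m L h * n := by
      rw [abs_mul, abs_mul, abs_of_nonneg hn, ← max_mul_of_nonneg _ _ hn, max_comm]
      simp [gradientStepRate]

variable {f : E → ℝ} {m L h : ℝ}

variable (E) in
/-- The real inner product as a continuous bilinear map. Mathlib types `innerSL ℝ` as
conjugate-linear in the first argument, which prevents subtracting a bilinear map from it. -/
noncomputable def realInnerSL : E →L[ℝ] E →L[ℝ] ℝ := innerSL ℝ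

@[simp]
lemma realInnerSL_apply_apply (u v : E) : realInnerSL E u v = inner ℝ u v := rfl

lemma norm_realInnerSL_sub_smul_fderiv_fderiv_le {x : E} (hf : ContDiffAt ℝ 2 f x)
    (hHess : ∀ v, m * ‖v‖ ^ 2 ≤ iteratedFDeriv ℝ 2 f x ![v, v] ∧
      iteratedFDeriv ℝ 2 f x ![v, v] ≤ L * ‖v‖ ^ 2) (hh : 0 ≤ h) :
    ‖realInnerSL E - h • fderiv ℝ (fderiv ℝ f) x‖ ≤ gradientStepRate m L h := by
  refine opNorm_le_of_symm_of_abs_apply_self_le (NNReal.coe_nonneg _) (fun u v ↦ ?_) fun v ↦ ?_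
  · have hsymm : IsSymmSndFDerivAt ℝ f x := hf.isSymmSndFDerivAt (by simp)
    simp [hsymm u v, real_inner_comm]
  · have hv := hHess v
    simp only [iteratedFDeriv_two_apply, Matrix.cons_val_zero, Matrix.cons_val_one] at hv
    simpa using abs_sub_mul_le_gradientStepRate_mul hh (sq_nonneg ‖v‖) hv.1 hv.2

variable [CompleteSpace E]

lemma toDual_gradientStep (x : E) :
    InnerProductSpace.toDual ℝ E (gradientStep f h x) = realInnerSL E x - h • fderiv ℝ f x := by
  ext v
  simp [gradientStep]

lemma lipschitzWith_gradientStep (hf : ContDiff ℝ 2 f)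
    (hHess : ∀ x v, m * ‖v‖ ^ 2 ≤ iteratedFDeriv ℝ 2 f x ![v, v] ∧
      iteratedFDeriv ℝ 2 f x ![v, v] ≤ L * ‖v‖ ^ 2) (hh : 0 ≤ h) :
    LipschitzWith (gradientStepRate m L h) (gradientStep f h) := by
  have hf' : Differentiable ℝ (fderiv ℝ f) :=
    (hf.fderiv_right (m := 1) (by norm_num)).differentiable one_ne_zero
  have hderiv (x : E) : HasFDerivAt (fun x ↦ realInnerSL E x - h • fderiv ℝ f x)
      (realInnerSL E - h • fderiv ℝ (fderiv ℝ f) x) x :=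
    (realInnerSL E).hasFDerivAt.sub ((hf' x).hasFDerivAt.const_smul h)
  have hdual : LipschitzWith (gradientStepRate m L h) fun x ↦ realInnerSL E x - h • fderiv ℝ f x :=
    lipschitzWith_of_nnnorm_fderiv_le (𝕜 := ℝ) (fun x ↦ (hderiv x).differentiableAt) fun x ↦ by
      rw [(hderiv x).fderiv]
      exact norm_realInnerSL_sub_smul_fderiv_fderiv_le hf.contDiffAt (hHess x) hh
  intro x y
  rw [← (InnerProductSpace.toDual ℝ E).isometry.edist_eq, toDual_gradientStep, toDual_gradientStep]
  exact hdual x y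

lemma enorm_gradientStep_le (hf : ContDiff ℝ 2 f)
    (hHess : ∀ x v, m * ‖v‖ ^ 2 ≤ iteratedFDeriv ℝ 2 f x ![v, v] ∧
      iteratedFDeriv ℝ 2 f x ![v, v] ≤ L * ‖v‖ ^ 2) (hgrad0 : gradient f 0 = 0)
    (hh : 0 ≤ h) (x : E) : ‖gradientStep f h x‖ₑ ≤ gradientStepRate m L h * ‖x‖ₑ := by
  simpa [gradientStep, hgrad0] using lipschitzWith_gradientStep hf hHess hh x 0

end GradientStep

lemma gradientStepRate_sq_le {m L h : ℝ} (hm : 0 < m) (hmL : m ≤ L) (hh0 : 0 ≤ h)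
    (hh1 : h ≤ 1 / (4 * (L / m) * L)) :
    (gradientStepRate m L h : ℝ≥0∞) ^ 2 ≤ ENNReal.ofReal (1 - 7 / 4 * m * h) := by
  have hL : 0 < L := hm.trans_le hmL
  have hmh : m * h ≤ L * h := by gcongr
  have hLh : L * h ≤ 1 / 4 := by
    calc L * h ≤ L * (1 / (4 * (L / m) * L)) := by gcongr
      _ = m / L / 4 := by field_simp
      _ ≤ 1 / 4 := by gcongr; exact (div_le_one hL).2 hmL
  have hrate : (gradientStepRate m L h : ℝ) = 1 - m * h := by
    simp only [gradientStepRate, NNReal.coe_max, coe_nnnorm, Real.norm_eq_abs]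
    rw [abs_of_nonneg (by linarith), abs_of_nonneg (by linarith), max_eq_left (by linarith)]
  rw [← ENNReal.ofReal_coe_nnreal, ← ENNReal.ofReal_pow (NNReal.coe_nonneg _), hrate]
  exact ENNReal.ofReal_le_ofReal (by nlinarith [mul_nonneg hm.le hh0])

section SecondMoment

variable {Ω E : Type*} {mΩ : MeasurableSpace Ω} {P : Measure Ω} [NormedAddCommGroup E]

lemma lintegral_enorm_sq_eq_ofReal_integral {Z : Ω → E} (hZ : MemLp Z 2 P) :
    ∫⁻ ω, ‖Z ω‖ₑ ^ 2 ∂P = ENNReal.ofReal (∫ ω, ‖Z ω‖ ^ 2 ∂P) := by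
  rw [ofReal_integral_eq_lintegral_ofReal (hZ.integrable_norm_pow two_ne_zero)
    (ae_of_all _ fun ω ↦ by positivity)]
  simp only [ENNReal.ofReal_pow (norm_nonneg _), ofReal_norm]

variable [InnerProductSpace ℝ E] [CompleteSpace E] [IsProbabilityMeasure P]

lemma lintegral_enorm_const_add_sq {Z : Ω → E} (hZ : MemLp Z 2 P) (hZ0 : ∫ ω, Z ω ∂P = 0) (y : E) :
    ∫⁻ ω, ‖y + Z ω‖ₑ ^ 2 ∂P = ‖y‖ₑ ^ 2 + ∫⁻ ω, ‖Z ω‖ₑ ^ 2 ∂P := by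
  have hint : Integrable Z P := hZ.integrable one_le_two
  have hcross : ∫ ω, inner ℝ y (Z ω) ∂P = 0 := by rw [integral_inner hint, hZ0, inner_zero_right]
  have hreal : ∫ ω, ‖y + Z ω‖ ^ 2 ∂P = ‖y‖ ^ 2 + ∫ ω, ‖Z ω‖ ^ 2 ∂P := by
    have hint_inner : Integrable (fun ω ↦ 2 * inner ℝ y (Z ω)) P := (hint.const_inner y).const_mul 2
    simp only [norm_add_sq_real]
    rw [integral_add (by fun_prop) (hZ.integrable_norm_pow two_ne_zero),
      integral_add (integrable_const _) hint_inner, integral_const_mul, hcross]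
    simp
  have hshift : MemLp (fun ω ↦ y + Z ω) 2 P := (memLp_const y).add hZ
  rw [lintegral_enorm_sq_eq_ofReal_integral hshift, lintegral_enorm_sq_eq_ofReal_integral hZ, hreal,
    ENNReal.ofReal_add (by positivity) (by positivity), ENNReal.ofReal_pow (norm_nonneg y),
    ofReal_norm]

variable [SecondCountableTopology E] [MeasurableSpace E] [BorelSpace E]

lemma lintegral_enorm_add_sq_of_indepFun {Y Z : Ω → E} (hY : AEMeasurable Y P) (hZ : MemLp Z 2 P)
    (hZ0 : ∫ ω, Z ω ∂P = 0) (hYZ : IndepFun Y Z P) :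
    ∫⁻ ω, ‖Y ω + Z ω‖ₑ ^ 2 ∂P = ∫⁻ ω, ‖Y ω‖ₑ ^ 2 ∂P + ∫⁻ ω, ‖Z ω‖ₑ ^ 2 ∂P := by
  have hZm : AEMeasurable Z P := hZ.aestronglyMeasurable.aemeasurable
  calc ∫⁻ ω, ‖Y ω + Z ω‖ₑ ^ 2 ∂P
      = ∫⁻ p, ‖p.1 + p.2‖ₑ ^ 2 ∂(P.map fun ω ↦ (Y ω, Z ω)) := by
        rw [lintegral_map' (by fun_prop) (hY.prodMk hZm)]
    _ = ∫⁻ y, ∫⁻ z, ‖y + z‖ₑ ^ 2 ∂(P.map Z) ∂(P.map Y) := by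
        rw [(indepFun_iff_map_prod_eq_prod_map_map hY hZm).1 hYZ, lintegral_prod _ (by fun_prop)]
    _ = ∫⁻ ω, ∫⁻ ω', ‖Y ω + Z ω'‖ₑ ^ 2 ∂P ∂P := by
        rw [lintegral_map' (by fun_prop) hY]
        congr with ω
        rw [lintegral_map' (by fun_prop) hZm]
    _ = ∫⁻ ω, ‖Y ω‖ₑ ^ 2 ∂P + ∫⁻ ω, ‖Z ω‖ₑ ^ 2 ∂P := by
        simp only [lintegral_enorm_const_add_sq hZ hZ0]
        rw [lintegral_add_right _ measurable_const, lintegral_const, measure_univ, mul_one]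

end SecondMoment

section RandomRecursion

variable {Ω α : Type*} {mΩ : MeasurableSpace Ω} {P : Measure Ω} [MeasurableSpace α]
  {Φ : α → α → α} {x0 : Ω → α} {ξ X : ℕ → Ω → α}

lemma aemeasurable_recursion (hΦ : Measurable (Function.uncurry Φ)) (hx0 : AEMeasurable x0 P)
    (hξ : ∀ k, AEMeasurable (ξ k) P) (hX0 : X 0 = x0)
    (hX : ∀ k, X (k + 1) = fun ω ↦ Φ (X k ω) (ξ (k + 1) ω)) (k : ℕ) : AEMeasurable (X k) P := by
  induction k with
  | zero => rwa [hX0]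
  | succ k ih =>
    rw [hX]
    exact hΦ.comp_aemeasurable (ih.prodMk (hξ (k + 1)))

lemma exists_measurable_recursion_eq_comp (hΦ : Measurable (Function.uncurry Φ)) (hX0 : X 0 = x0)
    (hX : ∀ k, X (k + 1) = fun ω ↦ Φ (X k ω) (ξ (k + 1) ω)) (k : ℕ) :
    ∃ G : ((Finset.range (k + 1)).insertNone → α) → α, Measurable G ∧
      X k = fun ω ↦ G fun i ↦ i.1.elim x0 ξ ω := by
  induction k with
  | zero => exact ⟨fun z ↦ z ⟨none, Finset.none_mem_insertNone⟩, measurable_pi_apply _, hX0⟩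
  | succ k ih =>
    obtain ⟨G, hG, hXk⟩ := ih
    have hsub : (Finset.range (k + 1)).insertNone ⊆ (Finset.range (k + 1 + 1)).insertNone :=
      Finset.insertNone.monotone (Finset.range_mono (Nat.le_succ _))
    refine ⟨fun z ↦ Φ (G fun i ↦ z ⟨i, hsub i.2⟩) (z ⟨some (k + 1), by simp⟩), ?_, ?_⟩
    · exact hΦ.comp ((hG.comp (by fun_prop)).prodMk (measurable_pi_apply _))
    · rw [hX, hXk]
      rfl

lemma indepFun_recursion_succ (hΦ : Measurable (Function.uncurry Φ)) (hx0 : AEMeasurable x0 P)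
    (hξ : ∀ k, AEMeasurable (ξ k) P) (hindep : iIndepFun (fun i : Option ℕ ↦ i.elim x0 ξ) P)
    (hX0 : X 0 = x0) (hX : ∀ k, X (k + 1) = fun ω ↦ Φ (X k ω) (ξ (k + 1) ω)) (k : ℕ) :
    IndepFun (X k) (ξ (k + 1)) P := by
  obtain ⟨G, hG, hXk⟩ := exists_measurable_recursion_eq_comp hΦ hX0 hX k
  have hmeas (i : Option ℕ) : AEMeasurable (i.elim x0 ξ) P := by
    cases i with
    | none => exact hx0
    | some j => exact hξ j
  have hdisj : Disjoint (Finset.range (k + 1)).insertNone {some (k + 1)} := by simp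
  rw [hXk]
  exact (hindep.indepFun_finset₀ _ _ hdisj hmeas).comp hG
    (measurable_pi_apply ⟨some (k + 1), Finset.mem_singleton_self _⟩)

end RandomRecursion

section StandardGaussian

lemma stdGaussian_eq_stdGaussian_euclideanSpace (d : ℕ) :
    _root_.stdGaussian d = ProbabilityTheory.stdGaussian (Euc d) :=
  map_pi_eq_stdGaussian

lemma lintegral_enorm_sq_stdGaussian (E : Type*) [NormedAddCommGroup E] [InnerProductSpace ℝ E]
    [FiniteDimensional ℝ E] [MeasurableSpace E] [BorelSpace E] :
    ∫⁻ x, ‖x‖ₑ ^ 2 ∂(ProbabilityTheory.stdGaussian E) = Module.finrank ℝ E := by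
  let b := stdOrthonormalBasis ℝ E
  have hmem : MemLp id 2 (ProbabilityTheory.stdGaussian E) := IsGaussian.memLp_two_id
  have hcoord (i) : MemLp (fun x ↦ inner ℝ (b i) x) 2 (ProbabilityTheory.stdGaussian E) :=
    hmem.const_inner (b i)
  have hvar (i) : ∫ x, inner ℝ (b i) x ^ 2 ∂(ProbabilityTheory.stdGaussian E) = 1 := by
    have hv := variance_dual_stdGaussian (innerSL ℝ (b i))
    rw [variance_of_integral_eq_zero (by fun_prop) (integral_strongDual_stdGaussian _)] at hv
    simpa using hv
  have hreal : ∫ x, ‖x‖ ^ 2 ∂(ProbabilityTheory.stdGaussian E) = Module.finrank ℝ E := by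
    simp_rw [← b.sum_sq_norm_inner_right, Real.norm_eq_abs, sq_abs]
    rw [integral_finsetSum _ fun i _ ↦ (hcoord i).integrable_sq]
    simp [hvar]
  simpa [hreal] using lintegral_enorm_sq_eq_ofReal_integral hmem

lemma lintegral_enorm_sq_of_hasLaw_stdGaussian {Ω E : Type*} {mΩ : MeasurableSpace Ω}
    {P : Measure Ω} [NormedAddCommGroup E] [InnerProductSpace ℝ E] [FiniteDimensional ℝ E]
    [MeasurableSpace E] [BorelSpace E] {X : Ω → E}
    (hX : HasLaw X (ProbabilityTheory.stdGaussian E) P) :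
    ∫⁻ ω, ‖X ω‖ₑ ^ 2 ∂P = Module.finrank ℝ E :=
  (hX.lintegral_comp (f := fun x ↦ ‖x‖ₑ ^ 2) (by fun_prop)).trans (lintegral_enorm_sq_stdGaussian E)

end StandardGaussian

theorem lmc_one_step_second_moment_recursion_general
    {E : Type*} [NormedAddCommGroup E] [InnerProductSpace ℝ E] [CompleteSpace E]
    [SecondCountableTopology E] [MeasurableSpace E] [BorelSpace E]
    {Ω : Type*} {mΩ : MeasurableSpace Ω} {P : Measure Ω} [IsProbabilityMeasure P]
    {f : E → ℝ} {m L : ℝ} (hf : ContDiff ℝ 2 f)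
    (hHess : ∀ x v, m * ‖v‖ ^ 2 ≤ iteratedFDeriv ℝ 2 f x ![v, v] ∧
      iteratedFDeriv ℝ 2 f x ![v, v] ≤ L * ‖v‖ ^ 2)
    (hgrad0 : gradient f 0 = 0)
    {x0 : Ω → E} (hx0 : AEMeasurable x0 P)
    {ξ : ℕ → Ω → E} (hξ : ∀ k, MemLp (ξ k) 2 P) (hξ0 : ∀ k, ∫ ω, ξ k ω ∂P = 0)
    (hindep : iIndepFun (fun i : Option ℕ ↦ i.elim x0 ξ) P)
    {h : ℝ} (hh : 0 ≤ h)
    {Xb : ℕ → Ω → E} (hXb0 : Xb 0 = x0)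
    (hXb : ∀ k, Xb (k + 1) = fun ω ↦ gradientStep f h (Xb k ω) + √(2 * h) • ξ (k + 1) ω)
    (k : ℕ) :
    ∫⁻ ω, ‖Xb (k + 1) ω‖ₑ ^ 2 ∂P ≤
      gradientStepRate m L h ^ 2 * ∫⁻ ω, ‖Xb k ω‖ₑ ^ 2 ∂P +
        ENNReal.ofReal (2 * h) * ∫⁻ ω, ‖ξ (k + 1) ω‖ₑ ^ 2 ∂P := by
  have hstep : Measurable (gradientStep f h) :=
    (lipschitzWith_gradientStep hf hHess hh).continuous.measurable
  have hΦ : Measurable (Function.uncurry fun x z : E ↦ gradientStep f h x + √(2 * h) • z) :=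
    (hstep.comp measurable_fst).add (measurable_snd.const_smul _)
  have hξm (k : ℕ) : AEMeasurable (ξ k) P := (hξ k).aestronglyMeasurable.aemeasurable
  have hXm : AEMeasurable (Xb k) P := aemeasurable_recursion hΦ hx0 hξm hXb0 hXb k
  have hind : IndepFun (fun ω ↦ gradientStep f h (Xb k ω)) (fun ω ↦ √(2 * h) • ξ (k + 1) ω) P :=
    (indepFun_recursion_succ hΦ hx0 hξm hindep hXb0 hXb k).comp hstep (measurable_const_smul _)
  have hnoise0 : ∫ ω, √(2 * h) • ξ (k + 1) ω ∂P = 0 := by rw [integral_smul, hξ0, smul_zero]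
  have hsqrt : ‖√(2 * h)‖ₑ ^ 2 = ENNReal.ofReal (2 * h) := by
    rw [← ofReal_norm, ← ENNReal.ofReal_pow (norm_nonneg _), norm_eq_abs, sq_abs,
      sq_sqrt (by positivity)]
  calc ∫⁻ ω, ‖Xb (k + 1) ω‖ₑ ^ 2 ∂P
      = ∫⁻ ω, ‖gradientStep f h (Xb k ω)‖ₑ ^ 2 ∂P + ∫⁻ ω, ‖√(2 * h) • ξ (k + 1) ω‖ₑ ^ 2 ∂P := by
        rw [hXb]
        exact lintegral_enorm_add_sq_of_indepFun (hstep.comp_aemeasurable hXm)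
          ((hξ (k + 1)).const_smul _) hnoise0 hind
    _ ≤ ∫⁻ ω, gradientStepRate m L h ^ 2 * ‖Xb k ω‖ₑ ^ 2 ∂P +
          ∫⁻ ω, ENNReal.ofReal (2 * h) * ‖ξ (k + 1) ω‖ₑ ^ 2 ∂P := by
        simp only [enorm_smul, mul_pow, hsqrt]
        gcongr with ω
        rw [← mul_pow]
        gcongr
        exact enorm_gradientStep_le hf hHess hgrad0 hh _
    _ = _ := by
        rw [lintegral_const_mul' _ _ (by finiteness), lintegral_const_mul' _ _ (by finiteness)]

/-- **One-step second-moment recursion for LMC**.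
Let `f` be `m`-strongly convex and `L`-smooth (`0 < m ≤ L`) with `∇f(0) = 0`, and let
`x̄_k` be the LMC iterates `x̄_k = x̄_{k-1} - h ∇f(x̄_{k-1}) + √(2h) ξ_k` with i.i.d. standard
Gaussian vectors `ξ₁, ξ₂, …` independent of the square-integrable initial value `x̄₀ = x₀`.
Then for every `0 ≤ h ≤ 1/(4κL)` (where `κ = L/m`) and every `k`:
`E‖x̄_{k+1}‖² ≤ (1 - (7/4) m h) E‖x̄_k‖² + 2 h d`. -/
theorem lmc_one_step_second_moment_recursion
    {d : ℕ} {Ω : Type*} {mΩ : MeasurableSpace Ω} {P : Measure Ω} [IsProbabilityMeasure P]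
    {f : Euc d → ℝ} {m L : ℝ}
    (hm : 0 < m) (hmL : m ≤ L) (hf : ContDiff ℝ 2 f) (hHess : HessianBounds m L f)
    (hgrad0 : gradient f 0 = 0)
    {x0 : Ω → Euc d} (hx0 : MemLp x0 2 P)
    {ξ : ℕ → Ω → Euc d} (hξmeas : ∀ k, Measurable (ξ k))
    (hξlaw : ∀ k, P.map (ξ k) = stdGaussian d)
    (hindep : iIndepFun (fun i : Option ℕ => i.elim x0 ξ) P)
    {h : ℝ} (hh0 : 0 ≤ h) (hh1 : h ≤ 1 / (4 * (L / m) * L))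
    {Xb : ℕ → Ω → Euc d} (hXb0 : Xb 0 = x0)
    (hXb : ∀ k : ℕ, Xb (k + 1) =
      fun ω => Xb k ω - h • gradient f (Xb k ω) + Real.sqrt (2 * h) • ξ (k + 1) ω)
    (k : ℕ) :
    (∫⁻ ω, (‖Xb (k + 1) ω‖₊ : ℝ≥0∞) ^ 2 ∂P) ≤
      ENNReal.ofReal (1 - 7 / 4 * m * h) * (∫⁻ ω, (‖Xb k ω‖₊ : ℝ≥0∞) ^ 2 ∂P) +
        ENNReal.ofReal (2 * h * d) := by
  have hlaw (k : ℕ) : HasLaw (ξ k) (ProbabilityTheory.stdGaussian (Euc d)) P :=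
    ⟨(hξmeas k).aemeasurable, (hξlaw k).trans (stdGaussian_eq_stdGaussian_euclideanSpace d)⟩
  have hstep := lmc_one_step_second_moment_recursion_general hf hHess hgrad0
    hx0.aestronglyMeasurable.aemeasurable (fun k ↦ (hlaw k).hasGaussianLaw.memLp_two)
    (fun k ↦ (hlaw k).integral_eq.trans integral_id_stdGaussian) hindep hh0 hXb0 hXb k
  rw [lintegral_enorm_sq_of_hasLaw_stdGaussian (hlaw (k + 1)), finrank_euclideanSpace_fin,
    ← ENNReal.ofReal_natCast, ← ENNReal.ofReal_mul (by positivity)] at hstep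
  grw [gradientStepRate_sq_le hm hmL hh0 hh1] at hstep
  exact hstep
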